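/- For every vector v ∈ ℝ³, e^u · D_wρ(u,w,H)[v] = − Σ_{i,j} H_{ij} τ_j v_i, where D_wρ(u,w,H)[v] denotes the directional derivative of ρ with respect to the argument w in the direction v. (This is part (ii) of the lemma expressing the stress–energy components in terms of derivatives of the reduced energy density ρ: e^U ∂ρ/∂ψ^i = −τ^i, with the index raised by h^{ij}.) -/

import Mathlib

/-!
Write `D` for the derivative of `Λ` at `Ĝ(u,w,H)`. The direction `v` moves `Ĝ` by the symmetric
matrix `dĜ` with `dĜ^{00} = 2 e^{2u} wᵀHv`, `dĜ^{0i} = -e^{2u} (Hv)_i`, `dĜ^{ij} = 0`. Transposition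
invariance of `Λ` gives `D_{i0} = D_{0i}`, so the chain rule yields
`D_wΛ[v] = -2 e^{2u} ∑ i, (Hv)_i (D_{0i} - D_{00} w_i)`. In `τ_i` the terms containing `Λ g_{μν}`
cancel, leaving `τ_i = 2 (D_{0i} - D_{00} w_i)`, and `e^u e^{-3u} e^{2u} = 1`.
-/

noncomputable section

/-- The standard basis matrix `e_{μν}` of the space of 4×4 matrices. -/
def basisMat (μ ν : Fin 4) : Fin 4 → Fin 4 → ℝ := Pi.single μ (Pi.single ν 1)

/-- The inverse spacetime metric `Ĝ(u,w,H)`: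
`Ĝ^{00} = −e^{−2u} + e^{2u}·wᵀHw`, `Ĝ^{0i} = Ĝ^{i0} = −e^{2u}(Hw)_i`, `Ĝ^{ij} = e^{2u}H_{ij}`. -/
def Ghat (u : ℝ) (w : Fin 3 → ℝ) (H : Fin 3 → Fin 3 → ℝ) : Fin 4 → Fin 4 → ℝ :=
  Fin.cons
    (Fin.cons (-Real.exp (-(2*u)) + Real.exp (2*u) * ∑ i, ∑ j, w i * H i j * w j)
      (fun j : Fin 3 => -Real.exp (2*u) * ∑ k, H j k * w k))
    (fun i : Fin 3 => Fin.cons (-Real.exp (2*u) * ∑ k, H i k * w k)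
      (fun j : Fin 3 => Real.exp (2*u) * H i j))

/-- The spacetime metric `g(u,w,H)`, with `h := H⁻¹`:
`g_{00} = −e^{2u}`, `g_{0i} = g_{i0} = −e^{2u}w_i`, `g_{ij} = e^{−2u}h_{ij} − e^{2u}w_i w_j`. -/
def gLow (u : ℝ) (w : Fin 3 → ℝ) (H : Fin 3 → Fin 3 → ℝ) : Fin 4 → Fin 4 → ℝ :=
  Fin.cons
    (Fin.cons (-Real.exp (2*u)) (fun j : Fin 3 => -Real.exp (2*u) * w j))
    (fun i : Fin 3 => Fin.cons (-Real.exp (2*u) * w i)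
      (fun j : Fin 3 => Real.exp (-(2*u)) * (Matrix.of H)⁻¹ i j - Real.exp (2*u) * w i * w j))

/-- The stress–energy matrix `T_{μν} = 2 ∂Λ/∂M_{μν}(Ĝ) − Λ(Ĝ) g_{μν}`. -/
def Tmat (Λ : (Fin 4 → Fin 4 → ℝ) → ℝ) (u : ℝ) (w : Fin 3 → ℝ)
    (H : Fin 3 → Fin 3 → ℝ) : Fin 4 → Fin 4 → ℝ :=
  fun μ ν => 2 * fderiv ℝ Λ (Ghat u w H) (basisMat μ ν) - Λ (Ghat u w H) * gLow u w H μ ν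

/-- `τ := T_{00}`. -/
def tau (Λ : (Fin 4 → Fin 4 → ℝ) → ℝ) (u : ℝ) (w : Fin 3 → ℝ) (H : Fin 3 → Fin 3 → ℝ) : ℝ :=
  Tmat Λ u w H 0 0

/-- `τ_i := T_{0i} − τ·w_i`. -/
def tauVec (Λ : (Fin 4 → Fin 4 → ℝ) → ℝ) (u : ℝ) (w : Fin 3 → ℝ) (H : Fin 3 → Fin 3 → ℝ)
    (i : Fin 3) : ℝ :=
  Tmat Λ u w H 0 i.succ - tau Λ u w H * w i

/-- `τ_{ij} := T_{ij} − τ_i w_j − τ_j w_i − τ w_i w_j`. -/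
def tauMat (Λ : (Fin 4 → Fin 4 → ℝ) → ℝ) (u : ℝ) (w : Fin 3 → ℝ) (H : Fin 3 → Fin 3 → ℝ)
    (i j : Fin 3) : ℝ :=
  Tmat Λ u w H i.succ j.succ - tauVec Λ u w H i * w j - tauVec Λ u w H j * w i
    - tau Λ u w H * w i * w j

/-- The reduced energy density `ρ(u,w,H) := e^{−3u} Λ(Ĝ(u,w,H))`. -/
def rho (Λ : (Fin 4 → Fin 4 → ℝ) → ℝ) (u : ℝ) (w : Fin 3 → ℝ) (H : Fin 3 → Fin 3 → ℝ) : ℝ :=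
  Real.exp (-(3*u)) * Λ (Ghat u w H)

/-- The directional derivative of `w ↦ Ĝ(u,w,H)` in the direction `v`, for symmetric `H`. -/
def dGhat (u : ℝ) (w v : Fin 3 → ℝ) (H : Fin 3 → Fin 3 → ℝ) : Fin 4 → Fin 4 → ℝ :=
  Fin.cons
    (Fin.cons (2 * Real.exp (2*u) * ∑ i, ∑ j, w i * H i j * v j)
      (fun j : Fin 3 => -Real.exp (2*u) * ∑ k, H j k * v k))
    (fun i : Fin 3 => Fin.cons (-Real.exp (2*u) * ∑ k, H i k * v k) (fun _ : Fin 3 => 0))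

lemma differentiable_Ghat (u : ℝ) (H : Fin 3 → Fin 3 → ℝ) :
    Differentiable ℝ (fun w : Fin 3 → ℝ => Ghat u w H) := by
  refine differentiable_pi.2 fun μ => differentiable_pi.2 fun ν => ?_
  refine Fin.cases ?_ (fun i => ?_) μ <;> refine Fin.cases ?_ (fun j => ?_) ν <;>
    simp only [Ghat, Fin.cons_zero, Fin.cons_succ] <;> fun_prop

/-- `Ĝ` is quadratic in `w`: along the line `w + t v` only the `00` entry has a `t²` term. -/
lemma Ghat_line (u : ℝ) (w v : Fin 3 → ℝ) (H : Fin 3 → Fin 3 → ℝ)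
    (hH : ∀ i j, H i j = H j i) (t : ℝ) :
    Ghat u (w + t • v) H = Ghat u w H + t • dGhat u w v H
      + (t ^ 2 * (Real.exp (2*u) * ∑ i, ∑ j, v i * H i j * v j)) • basisMat 0 0 := by
  funext μ ν
  refine Fin.cases ?_ (fun i => ?_) μ <;> refine Fin.cases ?_ (fun j => ?_) ν
  · simp [Ghat, dGhat, basisMat, Fin.sum_univ_three]
    rw [hH 1 0, hH 2 0, hH 2 1]
    ring
  all_goals
    simp [Ghat, dGhat, basisMat, Fin.sum_univ_three]
  all_goals ring

lemma hasDerivAt_Ghat_line (u : ℝ) (w v : Fin 3 → ℝ) (H : Fin 3 → Fin 3 → ℝ)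
    (hH : ∀ i j, H i j = H j i) :
    HasDerivAt (fun t : ℝ => Ghat u (w + t • v) H) (dGhat u w v H) 0 := by
  simp only [Ghat_line u w v H hH]
  have h1 : HasDerivAt (fun t : ℝ => t • dGhat u w v H) ((1 : ℝ) • dGhat u w v H) 0 :=
    (hasDerivAt_id (0 : ℝ)).smul_const _
  have h2 := (((hasDerivAt_id (0 : ℝ)).pow 2).mul_const
    (Real.exp (2*u) * ∑ i, ∑ j, v i * H i j * v j)).smul_const (basisMat 0 0)
  have h3 := (h1.const_add (Ghat u w H)).add h2
  have h0 : (1 : ℝ) • dGhat u w v H + (((2 : ℕ) : ℝ) * id (0 : ℝ) ^ (2 - 1) * 1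
      * (Real.exp (2*u) * ∑ i, ∑ j, v i * H i j * v j)) • basisMat 0 0 = dGhat u w v H := by
    simp
  exact h3.congr_deriv h0

lemma fderiv_Ghat (u : ℝ) (w v : Fin 3 → ℝ) (H : Fin 3 → Fin 3 → ℝ)
    (hH : ∀ i j, H i j = H j i) :
    fderiv ℝ (fun w' : Fin 3 → ℝ => Ghat u w' H) w v = dGhat u w v H := by
  rw [← ((differentiable_Ghat u H) w).lineDeriv_eq_fderiv]
  exact (hasDerivAt_Ghat_line u w v H hH).deriv

lemma Ghat_symm (u : ℝ) (w : Fin 3 → ℝ) (H : Fin 3 → Fin 3 → ℝ)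
    (hH : ∀ i j, H i j = H j i) :
    (fun μ ν => Ghat u w H ν μ) = Ghat u w H := by
  funext μ ν
  refine Fin.cases ?_ (fun i => ?_) μ <;> refine Fin.cases ?_ (fun j => ?_) ν <;>
    simp [Ghat]
  exact hH _ _

/-- At a symmetric matrix, the gradient of a transposition-invariant function is symmetric. -/
lemma fderiv_basisMat_symm (Λ : (Fin 4 → Fin 4 → ℝ) → ℝ) (hΛ : Differentiable ℝ Λ)
    (hΛsymm : ∀ M : Fin 4 → Fin 4 → ℝ, Λ (fun μ ν => M ν μ) = Λ M)
    (G : Fin 4 → Fin 4 → ℝ) (hG : (fun μ ν => G ν μ) = G) (μ ν : Fin 4) :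
    fderiv ℝ Λ G (basisMat μ ν) = fderiv ℝ Λ G (basisMat ν μ) := by
  have hb : ∀ a b : Fin 4, (fun t : ℝ => Λ (G + t • basisMat a b))
      = fun t : ℝ => Λ (G + t • basisMat b a) := by
    intro a b
    funext t
    rw [← hΛsymm]
    congr 1
    funext i j
    have h := congrFun (congrFun hG i) j
    simp only [Pi.add_apply, Pi.smul_apply, h, basisMat, Pi.single_apply]
    by_cases hi : i = b <;> by_cases hj : j = a <;> simp [hi, hj]
  rw [← (hΛ G).lineDeriv_eq_fderiv, ← (hΛ G).lineDeriv_eq_fderiv, lineDeriv, lineDeriv, hb]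

lemma eq_sum_basisMat (M : Fin 4 → Fin 4 → ℝ) : M = ∑ μ, ∑ ν, M μ ν • basisMat μ ν := by
  funext i j
  simp only [Finset.sum_apply, Pi.smul_apply, basisMat]
  fin_cases i <;> fin_cases j <;> simp [Fin.sum_univ_four]

lemma apply_eq_sum_basisMat (L : (Fin 4 → Fin 4 → ℝ) →L[ℝ] ℝ) (M : Fin 4 → Fin 4 → ℝ) :
    L M = ∑ μ, ∑ ν, M μ ν * L (basisMat μ ν) := by
  conv_lhs => rw [eq_sum_basisMat M]
  simp only [map_sum, map_smul, smul_eq_mul]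

/-- The `Λ g_{μν}` contributions to `τ_i` cancel, since `g_{0i} = g_{00} w_i`. -/
lemma tauVec_eq (Λ : (Fin 4 → Fin 4 → ℝ) → ℝ) (u : ℝ) (w : Fin 3 → ℝ)
    (H : Fin 3 → Fin 3 → ℝ) (i : Fin 3) :
    tauVec Λ u w H i = 2 * (fderiv ℝ Λ (Ghat u w H) (basisMat 0 i.succ)
      - fderiv ℝ Λ (Ghat u w H) (basisMat 0 0) * w i) := by
  simp only [tauVec, tau, Tmat, gLow, Fin.cons_zero, Fin.cons_succ]
  ring

/-- Part (ii) of the lemma: `e^U ∂ρ/∂ψ^i = −τ^i` (index raised with `H = h^{ij}`),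
contracted with an arbitrary direction `v`. -/
theorem stmt_1 (Λ : (Fin 4 → Fin 4 → ℝ) → ℝ) (hΛ : ContDiff ℝ 1 Λ)
    (hΛsymm : ∀ M : Fin 4 → Fin 4 → ℝ, Λ (fun μ ν => M ν μ) = Λ M)
    (u : ℝ) (w : Fin 3 → ℝ) (H : Fin 3 → Fin 3 → ℝ)
    (hHsymm : ∀ i j, H i j = H j i) (hHinv : IsUnit (Matrix.of H).det)
    (v : Fin 3 → ℝ) :
    Real.exp u * fderiv ℝ (fun w' : Fin 3 → ℝ => rho Λ u w' H) w v
      = -∑ i, ∑ j, H i j * tauVec Λ u w H j * v i := by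
  have hd : Differentiable ℝ Λ := hΛ.differentiable (by norm_num)
  have hG := differentiable_Ghat u H w
  have hchain : fderiv ℝ (fun w' : Fin 3 → ℝ => rho Λ u w' H) w v
      = Real.exp (-(3*u)) * fderiv ℝ Λ (Ghat u w H) (dGhat u w v H) := by
    have h := ((hd (Ghat u w H)).hasFDerivAt.comp w hG.hasFDerivAt).const_mul (Real.exp (-(3*u)))
    have h' : HasFDerivAt (fun w' : Fin 3 → ℝ => rho Λ u w' H) _ w := h
    rw [h'.fderiv, ← fderiv_Ghat u w v H hHsymm]
    simp
  have hsymm := fderiv_basisMat_symm Λ hd hΛsymm _ (Ghat_symm u w H hHsymm)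
  have hexp : Real.exp u * Real.exp (-(3*u)) * Real.exp (2*u) = 1 := by
    rw [← Real.exp_add, ← Real.exp_add, ← Real.exp_zero]
    congr 1
    ring
  have hD : fderiv ℝ Λ (Ghat u w H) (dGhat u w v H)
      = Real.exp (2*u) * -∑ i, ∑ j, H i j * tauVec Λ u w H j * v i := by
    refine (apply_eq_sum_basisMat (fderiv ℝ Λ (Ghat u w H)) (dGhat u w v H)).trans ?_
    simp only [tauVec_eq, Fin.sum_univ_succ (n := 3)]
    simp only [hsymm (Fin.succ _) 0, dGhat, Fin.cons_zero, Fin.cons_succ, Fin.sum_univ_three]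
    rw [hHsymm 1 0, hHsymm 2 0, hHsymm 2 1]
    ring
  rw [hchain, hD]
  linear_combination (-∑ i, ∑ j, H i j * tauVec Λ u w H j * v i) * hexp
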